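/- Under Assumptions A1 and A2, let s ≥ 1 be an integer. Then for every k ∈ {1,…,s}, all integers 0 ≤ t_1 ≤ ⋯ ≤ t_k ≤ n−1, all integers p_1,…,p_k ≥ 1 with p_1+⋯+p_k ≤ s, and all functions h_ℓ ∈ L_{V^{p_ℓ/s}} (ℓ = 1,…,k), the centered moment under the stationary chain satisfies |Ē_π[h_1(X_{t_1}),…,h_k(X_{t_k})]| ≤ 2^{k−1}·(cπ(V))^{Σ_{ℓ=1}^k Σ_{j=ℓ}^k p_j/s}·ρ^{Σ_{j=2}^k (t_j−t_{j−1})·p_j/s}·Π_{ℓ=1}^k ‖h_ℓ‖_{V^{p_ℓ/s}}. -/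

import Mathlib

open MeasureTheory ProbabilityTheory Finset
open scoped ENNReal Classical

noncomputable section

/-- `n`-th iterate of a Markov kernel. -/
def kIter {Y : Type*} [MeasurableSpace Y] (Q : ProbabilityTheory.Kernel Y Y) :
    ℕ → ProbabilityTheory.Kernel Y Y
  | 0 => ProbabilityTheory.Kernel.id
  | n + 1 => (kIter Q n).comp Q

/-- `U`-weighted total variation distance between two finite measures:
`∫ U d|μ - ν|`, via the Jordan decomposition of `μ - ν`. -/
def wTV {Y : Type*} [MeasurableSpace Y] (U : Y → ℝ) (μ ν : Measure Y) : ℝ :=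
  (∫ x, U x ∂(μ - ν)) + ∫ x, U x ∂(ν - μ)

/-- `U`-weighted sup norm `‖g‖_U = sup_x |g x| / U x`. -/
def vnorm {Y : Type*} (U : Y → ℝ) (g : Y → ℝ) : ℝ := ⨆ x, |g x| / U x

/-- Membership in the class `L_U`: measurable with finite `U`-weighted sup norm. -/
structure MemL {Y : Type*} [MeasurableSpace Y] (U : Y → ℝ) (g : Y → ℝ) : Prop where
  meas : Measurable g
  bdd : BddAbove (Set.range fun x => |g x| / U x)

/-- `(Xs n)` is a Markov chain with initial distribution `ξ` and Markov kernel `Q`: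
the law of `Xs 0` is `ξ` and, conditionally on the past up to time `n`, the
distribution of `Xs (n+1)` is `Q (Xs n)`. -/
structure IsMarkovChain {X : Type*} [MeasurableSpace X] {Ω : Type*} [MeasurableSpace Ω]
    (P : Measure Ω) (Xs : ℕ → Ω → X) (ξ : Measure X)
    (Q : ProbabilityTheory.Kernel X X) : Prop where
  meas : ∀ n, Measurable (Xs n)
  init : P.map (Xs 0) = ξ
  markov : ∀ (n : ℕ) (f : X → ℝ), Measurable f → (∀ x, |f x| ≤ 1) →
    (P[fun ω => f (Xs (n + 1) ω) |
        ⨆ i ∈ Finset.range (n + 1), MeasurableSpace.comap (Xs i) inferInstance])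
      =ᵐ[P] fun ω => ∫ y, f y ∂(Q (Xs n ω))

/-- The combinatorial coefficient `B_γ(u,q)`. -/
def Bcoef (γ : ℝ) (u q : ℕ) : ℝ :=
  ((2 * q).factorial : ℝ) / (u.factorial : ℝ) *
    ∑ k ∈ Finset.univ.filter
        (fun k : Fin u → Fin (2 * q + 1) =>
          (∀ i, 2 ≤ (k i : ℕ)) ∧ ∑ i, (k i : ℕ) = 2 * q),
      ∏ i, ((k i : ℕ).factorial : ℝ) ^ (γ + 2)

/-- The `2q`-th moment `(2q)!/(q! 2^q)` of the standard Gaussian. -/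
def gaussMoment (q : ℕ) : ℝ := ((2 * q).factorial : ℝ) / ((q.factorial : ℝ) * 2 ^ q)

/-- The auxiliary sequence `Z_ℓ` in the definition of centered moments:
`Z_{k+1} = 1`, `Z_ℓ = W_ℓ Z_{ℓ+1} - E[W_ℓ Z_{ℓ+1}]`. -/
def Zseq {Ω : Type*} [MeasurableSpace Ω] (P : Measure Ω) : List (Ω → ℝ) → Ω → ℝ
  | [] => fun _ => 1
  | W :: rest => fun ω => W ω * Zseq P rest ω - ∫ ω', W ω' * Zseq P rest ω' ∂P

/-- The centered moment `Ē[W_1, …, W_k] = E[W_1 Z_2]`. -/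
def cmom {Ω : Type*} [MeasurableSpace Ω] (P : Measure Ω) : List (Ω → ℝ) → ℝ
  | [] => 0
  | W :: rest => ∫ ω, W ω * Zseq P rest ω ∂P

lemma add_sub_eq_add_sub' {Y : Type*} [MeasurableSpace Y] (μ ν : Measure Y)
    [IsFiniteMeasure μ] [IsFiniteMeasure ν] : μ + (ν - μ) = ν + (μ - ν) := by
  rw [← Measure.toSignedMeasure_eq_toSignedMeasure_iff, Measure.toSignedMeasure_add,
    Measure.toSignedMeasure_add]
  have := Measure.sub_toSignedMeasure_eq_toSignedMeasure_sub (μ := μ) (ν := ν)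
  rw [sub_eq_sub_iff_add_eq_add] at this
  rw [this, add_comm]

lemma young_aux {v w α : ℝ} (hv : 0 < v) (hw : 0 < w) (h0 : 0 ≤ α) (h1 : α ≤ 1) :
    v ^ α ≤ w ^ α * (α * (v / w) + (1 - α)) := by
  have h := Real.geom_mean_le_arith_mean2_weighted h0 (sub_nonneg.2 h1)
    (div_nonneg hv.le hw.le) zero_le_one (by ring)
  rw [Real.one_rpow, mul_one, mul_one, Real.div_rpow hv.le hw.le] at h
  have hwp : 0 < w ^ α := Real.rpow_pos_of_pos hw α
  rw [div_le_iff₀ hwp] at h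
  linarith

lemma rpow_le_self_of_one_le {v α : ℝ} (hv : 1 ≤ v) (h1 : α ≤ 1) : v ^ α ≤ v := by
  simpa using Real.rpow_le_rpow_of_exponent_le hv h1

lemma integrable_of_le_rpow {Y : Type*} [MeasurableSpace Y] {η : Measure Y}
    {V : Y → ℝ} (hVe : ∀ x, 1 ≤ V x) (hi : Integrable V η) {α C : ℝ}
    (h1 : α ≤ 1) {g : Y → ℝ} (hg : Measurable g) (hC : 0 ≤ C)
    (hb : ∀ x, |g x| ≤ C * V x ^ α) : Integrable g η := by
  refine (hi.const_mul C).mono' hg.aestronglyMeasurable (ae_of_all _ fun x => ?_)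
  exact (hb x).trans (mul_le_mul_of_nonneg_left (rpow_le_self_of_one_le (hVe x) h1) hC)

lemma integral_rpow_le_of {Y : Type*} [MeasurableSpace Y] {η : Measure Y} [IsFiniteMeasure η]
    {V : Y → ℝ} (hV : Measurable V) (hVe : ∀ x, 1 ≤ V x) (hi : Integrable V η) {α w T : ℝ}
    (h0 : 0 ≤ α) (h1 : α ≤ 1) (hw : 0 < w) (hT : η.real Set.univ ≤ T)
    (hI : ∫ x, V x ∂η ≤ T * w) : ∫ x, V x ^ α ∂η ≤ T * w ^ α := by
  have hwp : 0 < w ^ α := Real.rpow_pos_of_pos hw α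
  have hint : Integrable (fun x => V x ^ α) η :=
    integrable_of_le_rpow hVe hi h1 (hV.pow_const α) zero_le_one (fun x => by
      rw [one_mul, abs_of_nonneg (Real.rpow_nonneg (by linarith [hVe x]) _)])
  have hint2 : Integrable (fun x => w ^ α * (α * (V x / w) + (1 - α))) η :=
    (((hi.div_const w).const_mul α).add (integrable_const _)).const_mul _
  calc ∫ x, V x ^ α ∂η ≤ ∫ x, w ^ α * (α * (V x / w) + (1 - α)) ∂η :=
        integral_mono hint hint2 fun x => young_aux (by linarith [hVe x]) hw h0 h1
    _ = w ^ α * (α * ((∫ x, V x ∂η) / w) + η.real Set.univ * (1 - α)) := by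
        rw [integral_const_mul, integral_add ((hi.div_const w).const_mul α) (integrable_const _),
          integral_const_mul, integral_div, integral_const, smul_eq_mul]
    _ ≤ w ^ α * (α * T + T * (1 - α)) := by
        apply mul_le_mul_of_nonneg_left _ hwp.le
        have : (∫ x, V x ∂η) / w ≤ T := by rwa [div_le_iff₀ hw]
        have := mul_le_mul_of_nonneg_left this h0
        have := mul_le_mul_of_nonneg_right hT (sub_nonneg.2 h1)
        linarith
    _ = T * w ^ α := by ring

lemma diff_bound {Y : Type*} [MeasurableSpace Y] (μ ν : Measure Y)
    [IsProbabilityMeasure μ] [IsProbabilityMeasure ν]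
    {V : Y → ℝ} (hV : Measurable V) (hVe : ∀ x, 1 ≤ V x) (hμ : Integrable V μ)
    (hν : Integrable V ν) {α w C : ℝ} (h0 : 0 ≤ α) (h1 : α ≤ 1) (hw : 0 < w) (hC : 0 ≤ C)
    (hI : wTV V μ ν ≤ 2 * w) {g : Y → ℝ} (hg : Measurable g)
    (hb : ∀ x, |g x| ≤ C * V x ^ α) :
    |∫ x, g x ∂μ - ∫ x, g x ∂ν| ≤ C * (2 * w ^ α) := by
  have e := add_sub_eq_add_sub' μ ν
  have ha : Integrable V (μ - ν) := hμ.mono_measure Measure.sub_le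
  have hb' : Integrable V (ν - μ) := hν.mono_measure Measure.sub_le
  have G : ∀ η : Measure Y, Integrable V η → Integrable g η := fun η hη =>
    integrable_of_le_rpow hVe hη h1 hg hC hb
  have e2 : ∫ x, g x ∂μ - ∫ x, g x ∂ν = ∫ x, g x ∂(μ - ν) - ∫ x, g x ∂(ν - μ) := by
    have := congrArg (fun η => ∫ x, g x ∂η) e
    rw [integral_add_measure (G _ hμ) (G _ hb'), integral_add_measure (G _ hν) (G _ ha)] at this
    linarith
  have hsum : Integrable V ((μ - ν) + (ν - μ)) := ha.add_measure hb'
  have hT : ((μ - ν) + (ν - μ)).real Set.univ ≤ 2 := by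
    rw [measureReal_add_apply]
    have A : (μ - ν).real Set.univ ≤ 1 := by
      rw [← probReal_univ (μ := μ)]
      exact ENNReal.toReal_mono (measure_ne_top _ _) (Measure.sub_le _)
    have B : (ν - μ).real Set.univ ≤ 1 := by
      rw [← probReal_univ (μ := ν)]
      exact ENNReal.toReal_mono (measure_ne_top _ _) (Measure.sub_le _)
    linarith
  have key := integral_rpow_le_of hV hVe hsum h0 h1 hw hT
    (by rw [integral_add_measure ha hb']; exact hI)
  have hint : ∀ η : Measure Y, Integrable V η → Integrable (fun x => C * V x ^ α) η := fun η hη =>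
    integrable_of_le_rpow hVe hη h1 ((hV.pow_const α).const_mul C) hC (fun x => by
      rw [abs_of_nonneg (mul_nonneg hC (Real.rpow_nonneg (by linarith [hVe x]) _))])
  have B : ∀ η : Measure Y, Integrable V η → |∫ x, g x ∂η| ≤ ∫ x, C * V x ^ α ∂η := fun η hη =>
    (abs_integral_le_integral_abs).trans (integral_mono (G _ hη).abs (hint _ hη) hb)
  calc |∫ x, g x ∂μ - ∫ x, g x ∂ν| ≤ |∫ x, g x ∂(μ - ν)| + |∫ x, g x ∂(ν - μ)| := by
        rw [e2]; exact abs_sub _ _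
    _ ≤ ∫ x, C * V x ^ α ∂(μ - ν) + ∫ x, C * V x ^ α ∂(ν - μ) := add_le_add (B _ ha) (B _ hb')
    _ = C * ∫ x, V x ^ α ∂((μ - ν) + (ν - μ)) := by
        rw [← integral_add_measure (hint _ ha) (hint _ hb'), integral_const_mul]
    _ ≤ _ := mul_le_mul_of_nonneg_left key hC

instance kIter_markov {Y : Type*} [MeasurableSpace Y] (Q : ProbabilityTheory.Kernel Y Y)
    [IsMarkovKernel Q] (n : ℕ) : IsMarkovKernel (kIter Q n) := by
  induction n with
  | zero => unfold kIter; infer_instance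
  | succ n ih => unfold kIter; infer_instance

lemma bind_kIter_succ {Y : Type*} [MeasurableSpace Y] (Q : ProbabilityTheory.Kernel Y Y)
    (μ : Measure Y) (j : ℕ) :
    μ.bind (kIter Q (j + 1)) = (μ.bind Q).bind (kIter Q j) := by
  rw [Measure.bind_bind Q.measurable.aemeasurable (kIter Q j).measurable.aemeasurable]
  congr 1

lemma bind_kIter_zero {Y : Type*} [MeasurableSpace Y] (Q : ProbabilityTheory.Kernel Y Y)
    (μ : Measure Y) : μ.bind (kIter Q 0) = μ := by
  simp [kIter]

lemma bind_kIter_inv {Y : Type*} [MeasurableSpace Y] (Q : ProbabilityTheory.Kernel Y Y)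
    (μ : Measure Y) (h : μ.bind Q = μ) (j : ℕ) : μ.bind (kIter Q j) = μ := by
  induction j with
  | zero => exact bind_kIter_zero Q μ
  | succ j ih => rw [bind_kIter_succ, h, ih]

lemma integral_comp_aux {Y : Type*} [MeasurableSpace Y] {κ : ProbabilityTheory.Kernel Y Y}
    {μ : Measure Y} {g : Y → ℝ} (hg : Integrable g (μ.bind κ)) :
    ∫ x, g x ∂(μ.bind κ) = ∫ x, ∫ y, g y ∂(κ x) ∂μ := by
  rw [Measure.comp_eq_comp_const_apply] at hg ⊢
  rw [Kernel.integral_comp hg, Kernel.const_apply]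

/-- The filtration. -/
abbrev filt {X Ω : Type*} [MeasurableSpace X] (Xs : ℕ → Ω → X) (n : ℕ) : MeasurableSpace Ω :=
  ⨆ i ∈ Finset.range (n + 1), MeasurableSpace.comap (Xs i) inferInstance

lemma filt_mono {X Ω : Type*} [MeasurableSpace X] (Xs : ℕ → Ω → X) {n m : ℕ} (h : n ≤ m) :
    filt Xs n ≤ filt Xs m := by
  apply biSup_mono
  intro i hi
  simp only [Finset.mem_range] at *
  omega

lemma filt_le {X Ω : Type*} [MeasurableSpace X] [mΩ : MeasurableSpace Ω] {Xs : ℕ → Ω → X}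
    (hX : ∀ n, Measurable (Xs n)) (n : ℕ) : filt Xs n ≤ mΩ :=
  iSup₂_le fun i _ => (hX i).comap_le

lemma filt_meas {X Ω : Type*} [MeasurableSpace X] (Xs : ℕ → Ω → X) (n : ℕ) :
    Measurable[filt Xs n] (Xs n) := by
  apply Measurable.of_comap_le
  exact le_iSup₂_of_le n (Finset.mem_range.2 (Nat.lt_succ_self n)) le_rfl

section chain
variable {X : Type*} [MeasurableSpace X] {Q : ProbabilityTheory.Kernel X X}
    [IsMarkovKernel Q] {piQ : Measure X} {Ω : Type*} [MeasurableSpace Ω] {P : Measure Ω}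
    [IsProbabilityMeasure P] {Xs : ℕ → Ω → X}

lemma chain_step (hc : IsMarkovChain P Xs piQ Q) (n : ℕ) (A : Set Ω)
    (hA : MeasurableSet[filt Xs n] A) :
    (P.restrict A).map (Xs (n + 1)) = ((P.restrict A).map (Xs n)).bind Q := by
  have hle := filt_le hc.meas n
  ext B hB
  rw [Measure.bind_apply hB Q.measurable.aemeasurable,
    lintegral_map (Q.measurable_coe hB) (hc.meas n), Measure.map_apply (hc.meas _) hB]
  have hf : Measurable (B.indicator (fun _ => (1 : ℝ))) := measurable_const.indicator hB
  have h := hc.markov n (B.indicator (fun _ => (1 : ℝ))) hf (fun x => by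
    by_cases hx : x ∈ B <;> simp [hx])
  have hi : Integrable (fun ω => B.indicator (fun _ => (1 : ℝ)) (Xs (n + 1) ω)) P := by
    have : (fun ω => B.indicator (fun _ => (1 : ℝ)) (Xs (n + 1) ω))
      = (Xs (n + 1) ⁻¹' B).indicator (fun _ => (1 : ℝ)) := rfl
    rw [this]
    exact (integrable_const _).indicator (hc.meas _ hB)
  have h2 := setIntegral_condExp hle hi hA
  rw [setIntegral_congr_ae (g := fun ω => (Q (Xs n ω)).real B) (hle _ hA) (by
    filter_upwards [h] with ω hω _
    rw [hω, integral_indicator_const _ hB, smul_eq_mul, mul_one])] at h2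
  have h3 : ∫ ω in A, B.indicator (fun _ => (1 : ℝ)) (Xs (n + 1) ω) ∂P
      = (P.restrict A).real (Xs (n + 1) ⁻¹' B) := by
    have : (fun ω => B.indicator (fun _ => (1 : ℝ)) (Xs (n + 1) ω))
      = (Xs (n + 1) ⁻¹' B).indicator (fun _ => (1 : ℝ)) := rfl
    rw [this, integral_indicator_const _ (hc.meas _ hB), smul_eq_mul, mul_one]
  rw [h3] at h2
  simp only [Measure.real] at h2
  rw [integral_toReal (f := fun ω => Q (Xs n ω) B)
    (((Q.measurable_coe hB).comp (hc.meas n)).aemeasurable)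
    (ae_of_all _ fun ω => measure_lt_top _ _)] at h2
  refine ((ENNReal.toReal_eq_toReal_iff' ?_ (measure_ne_top _ _)).1 h2).symm
  refine ne_of_lt (lt_of_le_of_lt (lintegral_mono (g := fun _ => 1) fun ω => prob_le_one) ?_)
  simp

lemma chain_steps (hc : IsMarkovChain P Xs piQ Q) (j : ℕ) : ∀ (n : ℕ) (A : Set Ω)
    (_ : MeasurableSet[filt Xs n] A),
    (P.restrict A).map (Xs (n + j)) = ((P.restrict A).map (Xs n)).bind (kIter Q j) := by
  induction j with
  | zero => intro n A _; rw [bind_kIter_zero]; rfl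
  | succ j ih =>
    intro n A hA
    rw [bind_kIter_succ, ← chain_step hc n A hA, ← ih (n + 1) A (filt_mono Xs (Nat.le_succ n) _ hA)]
    congr 2
    ring

lemma chain_stat (hc : IsMarkovChain P Xs piQ Q) (hinv : piQ.bind Q = piQ) (n : ℕ) :
    P.map (Xs n) = piQ := by
  have := chain_steps hc n 0 Set.univ MeasurableSet.univ
  rw [Measure.restrict_univ, hc.init, zero_add, bind_kIter_inv Q piQ hinv] at this
  exact this

lemma chain_condExp (hc : IsMarkovChain P Xs piQ Q) (hinv : piQ.bind Q = piQ) (n j : ℕ)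
    {g : X → ℝ} (hg : Measurable g) (hgi : Integrable g piQ) :
    P[fun ω => g (Xs (n + j) ω) | filt Xs n] =ᵐ[P]
      fun ω => ∫ y, g y ∂(kIter Q j (Xs n ω)) := by
  have hle := filt_le hc.meas n
  have hm : StronglyMeasurable (fun x => ∫ y, g y ∂(kIter Q j x)) :=
    hg.stronglyMeasurable.integral_kernel
  have hgi' : ∀ n, Integrable (fun ω => g (Xs n ω)) P := fun n => by
    have := hgi
    rw [← chain_stat hc hinv n] at this
    exact this.comp_measurable (hc.meas n)
  have hgb : ∀ A, MeasurableSet[filt Xs n] A →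
      Integrable g (((P.restrict A).map (Xs n)).bind (kIter Q j)) := fun A hA => by
    rw [← chain_steps hc j n A hA, integrable_map_measure hg.aestronglyMeasurable
      (hc.meas _).aemeasurable]
    exact (hgi' _).integrableOn
  symm
  refine ae_eq_condExp_of_forall_setIntegral_eq hle (hgi' _) ?_ ?_ ?_
  · intro A hA _
    have h1 : Integrable (fun x => ∫ y, g y ∂(kIter Q j x)) ((P.restrict A).map (Xs n)) := by
      refine (Measure.integrable_integral_norm_of_integrable_comp (hgb A hA)).mono'
        hm.aestronglyMeasurable (ae_of_all _ fun x => norm_integral_le_integral_norm _)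
    exact h1.comp_measurable (hc.meas n)
  · intro A hA _
    have e1 : ∫ ω in A, g (Xs (n + j) ω) ∂P = ∫ x, g x ∂((P.restrict A).map (Xs (n + j))) :=
      (integral_map (hc.meas _).aemeasurable hg.aestronglyMeasurable).symm
    rw [e1, chain_steps hc j n A hA, integral_comp_aux (hgb A hA),
      integral_map (hc.meas _).aemeasurable hm.aestronglyMeasurable]
  · exact (hm.measurable.comp (filt_meas Xs n)).aestronglyMeasurable
end chain

lemma erg_bound {X : Type*} [MeasurableSpace X] {Q : ProbabilityTheory.Kernel X X}
    [IsMarkovKernel Q] {V : X → ℝ} {c ρ : ℝ} {piQ : Measure X} [IsProbabilityMeasure piQ]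
    (hV : Measurable V) (hVe : ∀ x, 1 ≤ V x) (hinv : piQ.bind Q = piQ)
    (hpiV : Integrable V piQ) (hc : 1 ≤ c) (hρ0 : 0 < ρ)
    (herg : ∀ ξ : Measure X, IsProbabilityMeasure ξ → Integrable V ξ → ∀ k : ℕ,
      wTV V (ξ.bind (fun x => (kIter Q k) x)) piQ ≤
        c * ((∫ x, V x ∂ξ) + ∫ x, V x ∂piQ) * ρ ^ k)
    (hpi1 : 1 ≤ ∫ x, V x ∂piQ)
    (j : ℕ) {α C : ℝ} (h0 : 0 ≤ α) (h1 : α ≤ 1) (hC : 0 ≤ C) {g : X → ℝ} (hg : Measurable g)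
    (hb : ∀ x, |g x| ≤ C * V x ^ α) :
    ∀ᵐ x ∂piQ, |∫ y, g y ∂(kIter Q j x) - ∫ y, g y ∂piQ| ≤
      C * (2 * ((c * ∫ x, V x ∂piQ) * V x * ρ ^ j) ^ α) := by
  have hVi : Integrable V (piQ.bind (kIter Q j)) := by rwa [bind_kIter_inv Q piQ hinv]
  filter_upwards [Measure.ae_integrable_of_integrable_comp hVi] with x hx
  have hρj : 0 < ρ ^ j := pow_pos hρ0 j
  have hVx := hVe x
  refine diff_bound _ _ hV hVe hx hpiV h0 h1 (by positivity) hC ?_ hg hb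
  have hd : Integrable V (Measure.dirac x) := by
    apply integrable_dirac' hV.stronglyMeasurable
    simp
  have := herg (Measure.dirac x) inferInstance hd j
  rw [Measure.dirac_bind (kIter Q j).measurable, integral_dirac' _ _ hV.stronglyMeasurable] at this
  refine this.trans ?_
  have h3 : V x + ∫ x, V x ∂piQ ≤ 2 * ((∫ x, V x ∂piQ) * V x) := by nlinarith
  have h4 := mul_le_mul_of_nonneg_left h3 (mul_nonneg (zero_le_one.trans hc) hρj.le)
  nlinarith

lemma abs_le_vnorm {X : Type*} [MeasurableSpace X] {U g : X → ℝ} (hU : ∀ x, 0 < U x)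
    (hm : MemL U g) (x : X) : |g x| ≤ vnorm U g * U x := by
  rw [← div_le_iff₀ (hU x)]
  exact le_ciSup hm.bdd x

lemma vnorm_nonneg {X : Type*} {U g : X → ℝ} (hU : ∀ x, 0 < U x) : 0 ≤ vnorm U g :=
  Real.iSup_nonneg fun x => div_nonneg (abs_nonneg _) (hU x).le

section chain2
variable {X : Type*} [MeasurableSpace X] {Q : ProbabilityTheory.Kernel X X}
    [IsMarkovKernel Q] {piQ : Measure X} [IsProbabilityMeasure piQ]
    {Ω : Type*} [MeasurableSpace Ω] {P : Measure Ω}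
    [IsProbabilityMeasure P] {Xs : ℕ → Ω → X} {V : X → ℝ}

/-- One multiplication step. -/
lemma mul_step (hch : IsMarkovChain P Xs piQ Q) (hinv : piQ.bind Q = piQ)
    (hVe : ∀ x, 1 ≤ V x) (hpiV : Integrable V piQ) {N t : ℕ} (ht : t < N)
    {Z : Ω → ℝ} {a0 α D B : ℝ} (ha0 : 0 ≤ a0) (hα : 0 ≤ α) (h1 : a0 + α ≤ 1)
    (hZ : Measurable Z) (hD : 0 ≤ D)
    (hZD : ∀ ω, |Z ω| ≤ D * (∑ i ∈ range N, V (Xs i ω)) ^ α)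
    {φ : X → ℝ} (hφ : Measurable φ) (hφZ : P[Z | filt Xs t] =ᵐ[P] fun ω => φ (Xs t ω))
    (hB : 0 ≤ B) (hφB : ∀ x, |φ x| ≤ B * V x ^ α)
    {h0 : X → ℝ} (hm : MemL (fun x => V x ^ a0) h0) :
    (∀ ω, |h0 (Xs t ω) * Z ω| ≤ (vnorm (fun x => V x ^ a0) h0 * D) *
        (∑ i ∈ range N, V (Xs i ω)) ^ (a0 + α)) ∧
    Integrable (fun ω => h0 (Xs t ω) * Z ω) P ∧
    (∀ x, |h0 x * φ x| ≤ (vnorm (fun x => V x ^ a0) h0 * B) * V x ^ (a0 + α)) ∧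
    (P[fun ω => h0 (Xs t ω) * Z ω | filt Xs t] =ᵐ[P] fun ω => h0 (Xs t ω) * φ (Xs t ω)) ∧
    ∫ ω, h0 (Xs t ω) * Z ω ∂P = ∫ x, h0 x * φ x ∂piQ := by
  have hV0 : ∀ x, 0 < V x := fun x => by linarith [hVe x]
  have hU : ∀ x, 0 < V x ^ a0 := fun x => Real.rpow_pos_of_pos (hV0 x) _
  have hvn : 0 ≤ vnorm (fun x => V x ^ a0) h0 := vnorm_nonneg hU
  have hVM : ∀ ω, V (Xs t ω) ≤ ∑ i ∈ range N, V (Xs i ω) := fun ω =>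
    Finset.single_le_sum (f := fun i => V (Xs i ω)) (fun i _ => (hV0 _).le) (Finset.mem_range.2 ht)
  have hM1 : ∀ ω, 1 ≤ ∑ i ∈ range N, V (Xs i ω) := fun ω => (hVe _).trans (hVM ω)
  have hMi : Integrable (fun ω => ∑ i ∈ range N, V (Xs i ω)) P := by
    refine integrable_finsetSum _ fun i _ => ?_
    have := hpiV
    rw [← chain_stat hch hinv i] at this
    exact this.comp_measurable (hch.meas i)
  have hh : ∀ ω, |h0 (Xs t ω)| ≤ vnorm (fun x => V x ^ a0) h0 *
      (∑ i ∈ range N, V (Xs i ω)) ^ a0 := fun ω =>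
    (abs_le_vnorm hU hm _).trans (mul_le_mul_of_nonneg_left
      (Real.rpow_le_rpow (hV0 _).le (hVM ω) ha0) hvn)
  have b1 : ∀ ω, |h0 (Xs t ω) * Z ω| ≤ (vnorm (fun x => V x ^ a0) h0 * D) *
        (∑ i ∈ range N, V (Xs i ω)) ^ (a0 + α) := fun ω => by
    rw [abs_mul, Real.rpow_add (by linarith [hM1 ω])]
    refine (mul_le_mul (hh ω) (hZD ω) (abs_nonneg _) ((abs_nonneg _).trans (hh ω))).trans_eq ?_
    ring
  have b2 : ∀ x, |h0 x * φ x| ≤ (vnorm (fun x => V x ^ a0) h0 * B) * V x ^ (a0 + α) := fun x => by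
    rw [abs_mul, Real.rpow_add (hV0 x)]
    have := abs_le_vnorm hU hm x
    refine (mul_le_mul this (hφB x) (abs_nonneg _) ((abs_nonneg _).trans this)).trans_eq ?_
    ring
  have hhm : Measurable (fun ω => h0 (Xs t ω)) := hm.meas.comp (hch.meas t)
  have i1 : Integrable (fun ω => h0 (Xs t ω) * Z ω) P :=
    integrable_of_le_rpow hM1 hMi h1 (hhm.mul hZ) (mul_nonneg hvn hD) b1
  have i2 : Integrable Z P := integrable_of_le_rpow hM1 hMi (by linarith) hZ hD hZD
  have ce : P[fun ω => h0 (Xs t ω) * Z ω | filt Xs t] =ᵐ[P]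
      fun ω => h0 (Xs t ω) * φ (Xs t ω) := by
    have := condExp_mul_of_stronglyMeasurable_left (m := filt Xs t) (f := fun ω => h0 (Xs t ω))
      (g := Z) (μ := P) (hm.meas.comp (filt_meas Xs t)).stronglyMeasurable i1 i2
    refine this.trans ?_
    filter_upwards [hφZ] with ω hω
    simp only [Pi.mul_apply]
    rw [hω]
  refine ⟨b1, i1, b2, ce, ?_⟩
  rw [← integral_condExp (filt_le hch.meas t), integral_congr_ae ce, ← chain_stat hch hinv t]
  exact (integral_map (hch.meas t).aemeasurable
    (hm.meas.mul hφ).aestronglyMeasurable (f := fun x => h0 x * φ x)).symm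

/-- The bound constant. -/
def Bd (V : X → ℝ) (K ρ : ℝ) (k : ℕ) (T : Fin (k + 1) → ℕ) (a : Fin k → ℝ)
    (h : Fin k → X → ℝ) : ℝ :=
  2 ^ k * K ^ (∑ ℓ : Fin k, ∑ j ∈ Finset.univ.filter (fun j : Fin k => ℓ ≤ j), a j) *
    ρ ^ (∑ i : Fin k, ((T i.succ - T i.castSucc : ℕ) : ℝ) * a i) *
    ∏ i : Fin k, vnorm (fun x => V x ^ a i) (h i)

lemma sum_tail (k : ℕ) (a : Fin (k + 1) → ℝ) :
    (∑ ℓ : Fin (k + 1), ∑ j ∈ Finset.univ.filter (fun j : Fin (k + 1) => ℓ ≤ j), a j) =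
    ∑ i, a i + ∑ ℓ : Fin k, ∑ j ∈ Finset.univ.filter (fun j : Fin k => ℓ ≤ j), a j.succ := by
  rw [Fin.sum_univ_succ]
  congr 1
  · congr 1
    ext j
    simp
  · refine Finset.sum_congr rfl fun ℓ _ => ?_
    rw [Finset.sum_filter, Finset.sum_filter, Fin.sum_univ_succ]
    simp

lemma Bd_nonneg (hVe : ∀ x, 1 ≤ V x) {K ρ : ℝ} (hK : 0 < K) (hρ : 0 < ρ) (k : ℕ)
    (T : Fin (k + 1) → ℕ) (a : Fin k → ℝ) (h : Fin k → X → ℝ) : 0 ≤ Bd V K ρ k T a h := by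
  have : 0 ≤ ∏ i : Fin k, vnorm (fun x => V x ^ a i) (h i) :=
    Finset.prod_nonneg fun i _ =>
      vnorm_nonneg fun x => Real.rpow_pos_of_pos (by linarith [hVe x]) _
  unfold Bd
  positivity

lemma Bd_succ (hVe : ∀ x, 1 ≤ V x) {K ρ : ℝ} (hK : 0 < K) (hρ : 0 < ρ) (hρ1 : ρ ≤ 1) (k : ℕ)
    (T : Fin (k + 2) → ℕ) (a : Fin (k + 1) → ℝ) (ha : ∀ i, 0 ≤ a i) (h : Fin (k + 1) → X → ℝ)
    (x : X) :
    (vnorm (fun x => V x ^ a 0) (h 0) *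
      Bd V K ρ k (fun i => T i.succ) (fun i => a i.succ) (fun i => h i.succ)) *
      (2 * (K * V x * ρ ^ (T 1 - T 0)) ^ (∑ i, a i)) ≤
    Bd V K ρ (k + 1) T a h * V x ^ (∑ i, a i) := by
  have hVx : 0 < V x := by linarith [hVe x]
  have hpr : 0 ≤ ∏ i : Fin k, vnorm (fun x => V x ^ a i.succ) (h i.succ) :=
    Finset.prod_nonneg fun i _ =>
      vnorm_nonneg fun x => Real.rpow_pos_of_pos (by linarith [hVe x]) _
  have hv0 : 0 ≤ vnorm (fun x => V x ^ a 0) (h 0) :=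
      vnorm_nonneg fun x => Real.rpow_pos_of_pos (by linarith [hVe x]) _
  have hle : (ρ ^ (T 1 - T 0)) ^ (∑ i, a i) ≤ ρ ^ (((T 1 - T 0 : ℕ) : ℝ) * a 0) := by
    rw [← Real.rpow_natCast, ← Real.rpow_mul hρ.le]
    apply Real.rpow_le_rpow_of_exponent_ge hρ hρ1
    apply mul_le_mul_of_nonneg_left _ (Nat.cast_nonneg _)
    exact Finset.single_le_sum (fun i _ => ha i) (Finset.mem_univ _)
  unfold Bd
  rw [sum_tail, Fin.sum_univ_succ (n := k)
    (f := fun i : Fin (k + 1) => ((T i.succ - T i.castSucc : ℕ) : ℝ) * a i),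
    Fin.prod_univ_succ, Real.rpow_add hK, Real.rpow_add hρ,
    Real.mul_rpow (by positivity) (by positivity), Real.mul_rpow hK.le hVx.le]
  simp only [Fin.succ_zero_eq_one, Fin.castSucc_zero, Fin.succ_castSucc] at *
  set R := ρ ^ (∑ i : Fin k, ((T i.succ.succ - T i.succ.castSucc : ℕ) : ℝ) * a i.succ)
  have hR : 0 ≤ R := Real.rpow_nonneg hρ.le _
  set K1 := K ^ (∑ ℓ : Fin k, ∑ j ∈ Finset.univ.filter (fun j : Fin k => ℓ ≤ j), a j.succ)
  have hK1 : 0 ≤ K1 := Real.rpow_nonneg hK.le _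
  set K2 := K ^ (∑ i, a i)
  have hK2 : 0 ≤ K2 := Real.rpow_nonneg hK.le _
  set W := V x ^ (∑ i, a i)
  have hW : 0 ≤ W := Real.rpow_nonneg hVx.le _
  have h2k : (0 : ℝ) ≤ 2 ^ k := by positivity
  have := mul_le_mul_of_nonneg_left hle
    (mul_nonneg (mul_nonneg (mul_nonneg (mul_nonneg (mul_nonneg (mul_nonneg h2k hR) hK1) hK2) hW)
      hpr) hv0)
  rw [pow_succ]
  nlinarith

lemma main_aux {c ρ : ℝ} (hch : IsMarkovChain P Xs piQ Q)
    (hV : Measurable V) (hVe : ∀ x, 1 ≤ V x) (hinv : piQ.bind Q = piQ)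
    (hpiV : Integrable V piQ) (hc : 1 ≤ c) (hρ0 : 0 < ρ) (hρ1 : ρ ≤ 1)
    (herg : ∀ ξ : Measure X, IsProbabilityMeasure ξ → Integrable V ξ → ∀ k : ℕ,
      wTV V (ξ.bind (fun x => (kIter Q k) x)) piQ ≤
        c * ((∫ x, V x ∂ξ) + ∫ x, V x ∂piQ) * ρ ^ k)
    (hpi1 : 1 ≤ ∫ x, V x ∂piQ) (N : ℕ) : ∀ (k : ℕ) (T : Fin (k + 1) → ℕ) (_ : Monotone T)
    (_ : ∀ i, T i < N) (a : Fin k → ℝ) (_ : ∀ i, 0 ≤ a i) (_ : ∑ i, a i ≤ 1)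
    (h : Fin k → X → ℝ) (_ : ∀ i, MemL (fun x => V x ^ a i) (h i)),
    Measurable (Zseq P (List.ofFn fun i : Fin k => fun ω => h i (Xs (T i.succ) ω))) ∧
    (∃ D, 0 ≤ D ∧ ∀ ω,
      |Zseq P (List.ofFn fun i : Fin k => fun ω => h i (Xs (T i.succ) ω)) ω| ≤
      D * (∑ i ∈ range N, V (Xs i ω)) ^ (∑ i, a i)) ∧
    ∃ φ : X → ℝ, Measurable φ ∧
      (P[Zseq P (List.ofFn fun i : Fin k => fun ω => h i (Xs (T i.succ) ω)) | filt Xs (T 0)]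
        =ᵐ[P] fun ω => φ (Xs (T 0) ω)) ∧
      ∀ x, |φ x| ≤ Bd V (c * ∫ x, V x ∂piQ) ρ k T a h * V x ^ (∑ i, a i) := by
  have hV0 : ∀ x, 0 < V x := fun x => by linarith [hVe x]
  have hK : 0 < c * ∫ x, V x ∂piQ := by positivity
  intro k
  induction k with
  | zero =>
    intro T hT hTN a ha hs h hm
    have hZ : Zseq P (List.ofFn fun i : Fin 0 => fun ω => h i (Xs (T i.succ) ω)) = fun _ => 1 := by
      simp [Zseq]
    rw [hZ]
    refine ⟨measurable_const, ⟨1, zero_le_one, fun ω => by simp⟩, fun _ => 1, measurable_const,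
      ?_, fun x => by simp [Bd]⟩
    rw [condExp_const (filt_le hch.meas _)]
  | succ k ih =>
    intro T hT hTN a ha hs h hm
    rw [Fin.sum_univ_succ] at hs
    obtain ⟨hZ, ⟨D, hD, hZD⟩, φ, hφ, hφZ, hφB⟩ := ih (fun i => T i.succ)
      (fun i j hij => hT (Fin.succ_le_succ_iff.2 hij)) (fun i => hTN _) (fun i => a i.succ)
      (fun i => ha _) (by linarith [ha 0]) (fun i => h i.succ) (fun i => hm _)
    have hlist : (List.ofFn fun i : Fin (k + 1) => fun ω => h i (Xs (T i.succ) ω)) =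
      (fun ω => h 0 (Xs (T 1) ω)) ::
        (List.ofFn fun i : Fin k => fun ω => h i.succ (Xs (T i.succ.succ) ω)) := by
      rw [List.ofFn_succ]; rfl
    rw [hlist]
    set Z := Zseq P (List.ofFn fun i : Fin k => fun ω => h i.succ (Xs (T i.succ.succ) ω)) with hZdef
    have hB0 := Bd_nonneg hVe hK hρ0 k (fun i => T i.succ) (fun i => a i.succ) (fun i => h i.succ)
    obtain ⟨b1, i1, b2, ce, ei⟩ := mul_step hch hinv hVe hpiV (hTN 1) (ha 0)
      (Finset.sum_nonneg fun i _ => ha (Fin.succ i)) hs hZ hD hZD hφ hφZ hB0 hφB (hm 0)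
    rw [← Fin.sum_univ_succ] at b1 b2 hs
    have hv0 : 0 ≤ vnorm (fun x => V x ^ a 0) (h 0) :=
      vnorm_nonneg fun x => Real.rpow_pos_of_pos (hV0 x) _
    have hsum0 : 0 ≤ ∑ i, a i := Finset.sum_nonneg fun i _ => ha i
    have hgm : Measurable fun x => h 0 x * φ x := (hm 0).meas.mul hφ
    have hgi : Integrable (fun x => h 0 x * φ x) piQ :=
      integrable_of_le_rpow hVe hpiV hs hgm (mul_nonneg hv0 hB0) b2
    set I := ∫ x, h 0 x * φ x ∂piQ with hI
    have hZ' : Zseq P ((fun ω => h 0 (Xs (T 1) ω)) ::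
        (List.ofFn fun i : Fin k => fun ω => h i.succ (Xs (T i.succ.succ) ω))) =
        fun ω => h 0 (Xs (T 1) ω) * Z ω - I := by
      funext ω
      simp only [Zseq]
      rw [← hZdef, ei]
    rw [hZ']
    refine ⟨(((hm 0).meas.comp (hch.meas _)).mul hZ).sub_const _,
      ⟨vnorm (fun x => V x ^ a 0) (h 0) * D + |I|, by positivity, fun ω => ?_⟩, ?_⟩
    · have hM1 : 1 ≤ ∑ i ∈ range N, V (Xs i ω) :=
        (hVe (Xs (T 1) ω)).trans (Finset.single_le_sum (f := fun i => V (Xs i ω))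
          (fun i _ => (hV0 _).le) (Finset.mem_range.2 (hTN 1)))
      have := Real.one_le_rpow hM1 hsum0
      have h2 := le_mul_of_one_le_right (abs_nonneg I) this
      rw [add_mul]
      exact (abs_sub _ _).trans (add_le_add (b1 ω) h2)
    · have h01 : T 0 ≤ T 1 := hT (Fin.zero_le _)
      obtain ⟨j, hj⟩ := Nat.exists_eq_add_of_le h01
      have hj' : T 1 - T 0 = j := by omega
      have e1 := chain_condExp hch hinv (T 0) j hgm hgi
      rw [← hj] at e1
      have hψ : Measurable (fun x => ∫ y, h 0 y * φ y ∂(kIter Q j x) - I) :=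
        (hgm.stronglyMeasurable.integral_kernel).measurable.sub_const _
      have hae : ∀ᵐ x ∂piQ, |∫ y, h 0 y * φ y ∂(kIter Q j x) - I| ≤
          Bd V (c * ∫ x, V x ∂piQ) ρ (k + 1) T a h * V x ^ (∑ i, a i) := by
        filter_upwards [erg_bound hV hVe hinv hpiV hc hρ0 herg hpi1 j hsum0 hs
          (mul_nonneg hv0 hB0) hgm b2] with x hx
        refine hx.trans ?_
        have := Bd_succ hVe hK hρ0 hρ1 k T a ha h x
        rwa [hj'] at this
      set S := {x | |∫ y, h 0 y * φ y ∂(kIter Q j x) - I| ≤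
          Bd V (c * ∫ x, V x ∂piQ) ρ (k + 1) T a h * V x ^ (∑ i, a i)} with hS
      have hSm : MeasurableSet S :=
        measurableSet_le hψ.abs ((hV.pow_const _).const_mul _)
      refine ⟨S.indicator (fun x => ∫ y, h 0 y * φ y ∂(kIter Q j x) - I),
        hψ.indicator hSm, ?_, fun x => ?_⟩
      · have hae' : ∀ᵐ ω ∂P, Xs (T 0) ω ∈ S := by
          have h5 : ∀ᵐ x ∂(P.map (Xs (T 0))), x ∈ S := by
            rw [chain_stat hch hinv]; exact hae
          exact ae_of_ae_map (hch.meas _).aemeasurable h5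
        have c1 := condExp_sub i1 (integrable_const I) (filt Xs (T 0))
        have c2 := condExp_condExp_of_le (f := fun ω => h 0 (Xs (T 1) ω) * Z ω) (μ := P)
          (filt_mono Xs h01) (filt_le hch.meas _)
        have c3 := condExp_congr_ae (m := filt Xs (T 0)) ce
        refine c1.trans ?_
        filter_upwards [c2, c3, e1, hae'] with ω w2 w3 w4 w5
        rw [Set.indicator_of_mem w5, Pi.sub_apply, condExp_const (filt_le hch.meas _), ← w2,
          ← w4]
        rw [← w3]
      · by_cases hx : x ∈ S
        · rw [Set.indicator_of_mem hx]; exact hx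
        · rw [Set.indicator_of_notMem hx, abs_zero]
          exact mul_nonneg (Bd_nonneg hVe hK hρ0 _ _ _ _) (Real.rpow_nonneg (hV0 x).le _)

end chain2

/-- Centered-moment bound (Lemma 4): for `h_ℓ ∈ L_{V^{p_ℓ/s}}`,
`|Ē_π[h_1(X_{t_1}),…,h_k(X_{t_k})]| ≤ 2^{k-1} (cπ(V))^{Σ_ℓ Σ_{j≥ℓ} p_j/s}
  ρ^{Σ_{j=2}^k (t_j - t_{j-1}) p_j / s} Π_ℓ ‖h_ℓ‖_{V^{p_ℓ/s}}`. -/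
theorem centered_moments_bound
    {X : Type*} [MeasurableSpace X]
    (Q : ProbabilityTheory.Kernel X X) [ProbabilityTheory.IsMarkovKernel Q]
    (V : X → ℝ) (lam b : ℝ) (m : ℕ) (eps d c ρ : ℝ) (piQ : Measure X)
    [IsProbabilityMeasure piQ]
    -- Assumption A1
    (hV : Measurable V) (hVe : ∀ x, Real.exp 1 ≤ V x)
    (hlam0 : 0 < lam) (hlam1 : lam < 1) (hb : 0 ≤ b)
    (hdrift : ∀ x, ∫ y, V y ∂(Q x) ≤ lam * V x + b)
    -- Assumption A2
    (hm : 1 ≤ m) (heps0 : 0 < eps) (heps1 : eps < 1) (hd : 0 ≤ d)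
    (hsmallcond : lam + 2 * b / (1 + d) < 1)
    (hsmall : ∃ ν : Measure X, IsProbabilityMeasure ν ∧
      ∀ x, V x ≤ d → ∀ A : Set X, MeasurableSet A →
        ENNReal.ofReal eps * ν A ≤ (kIter Q m) x A)
    -- piQ is the unique invariant probability measure, with piQ(V) < ∞
    (hinv : piQ.bind (fun x => Q x) = piQ)
    (huniq : ∀ π' : Measure X, IsProbabilityMeasure π' →
      π'.bind (fun x => Q x) = π' → π' = piQ)
    (hpiV : Integrable V piQ)
    -- geometric ergodicity constants c ≥ 1, ρ ∈ (0,1)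
    (hc : 1 ≤ c) (hρ0 : 0 < ρ) (hρ1 : ρ < 1)
    (herg : ∀ ξ : Measure X, IsProbabilityMeasure ξ → Integrable V ξ → ∀ k : ℕ,
      wTV V (ξ.bind (fun x => (kIter Q k) x)) piQ ≤
        c * ((∫ x, V x ∂ξ) + ∫ x, V x ∂piQ) * ρ ^ k)
    -- the stationary canonical chain
    {Ω : Type*} [MeasurableSpace Ω] (P : Measure Ω) [IsProbabilityMeasure P]
    (Xs : ℕ → Ω → X) (hchain : IsMarkovChain P Xs piQ Q)
    -- indices, times, exponents and functions
    (s : ℕ) (hs : 1 ≤ s) (k : ℕ) (hk1 : 1 ≤ k) (hks : k ≤ s)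
    (n : ℕ) (hn : 1 ≤ n) (t : Fin k → ℕ) (hmono : Monotone t)
    (htn : ∀ i, t i ≤ n - 1)
    (p : Fin k → ℕ) (hp1 : ∀ i, 1 ≤ p i) (hps : ∑ i, p i ≤ s)
    (h : Fin k → X → ℝ)
    (hmem : ∀ i, MemL (fun x => V x ^ ((p i : ℝ) / (s : ℝ))) (h i)) :
    |cmom P (List.ofFn fun i : Fin k => fun ω => h i (Xs (t i) ω))| ≤
      2 ^ (k - 1) *
        (c * ∫ x, V x ∂piQ) ^
          (∑ ℓ : Fin k, ∑ j ∈ Finset.univ.filter (fun j : Fin k => ℓ ≤ j),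
            (p j : ℝ) / (s : ℝ)) *
        ρ ^ (∑ i : Fin (k - 1),
          ((t ⟨(i : ℕ) + 1, by have := i.isLt; omega⟩
              - t ⟨(i : ℕ), by have := i.isLt; omega⟩ : ℕ) : ℝ) *
            (p ⟨(i : ℕ) + 1, by have := i.isLt; omega⟩ : ℝ) / (s : ℝ)) *
        ∏ i : Fin k, vnorm (fun x => V x ^ ((p i : ℝ) / (s : ℝ))) (h i) := by
  have hVe1 : ∀ x, 1 ≤ V x := fun x => by
    have := Real.add_one_le_exp (1 : ℝ)
    linarith [hVe x]
  have hV0 : ∀ x, 0 < V x := fun x => by linarith [hVe1 x]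
  have hpi1 : 1 ≤ ∫ x, V x ∂piQ := by
    have := integral_mono (integrable_const (μ := piQ) (1 : ℝ)) hpiV hVe1
    simpa using this
  have hinv' : piQ.bind Q = piQ := hinv
  have hK : 0 < c * ∫ x, V x ∂piQ := by positivity
  obtain ⟨k, rfl⟩ : ∃ k', k = k' + 1 := ⟨k - 1, by omega⟩
  have hs0 : (0 : ℝ) < s := by exact_mod_cast hs
  have ha : ∀ i, 0 ≤ (p i : ℝ) / s := fun i => by positivity
  have hsum : ∑ i, (p i : ℝ) / s ≤ 1 := by
    rw [← Finset.sum_div, div_le_one hs0]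
    exact_mod_cast hps
  have hsum0 : 0 ≤ ∑ i, (p i : ℝ) / s := Finset.sum_nonneg fun i _ => ha i
  have hs' := hsum
  rw [Fin.sum_univ_succ] at hs'
  have htN : ∀ i, t i < n := fun i => by have := htn i; omega
  obtain ⟨hZ, ⟨D, hD, hZD⟩, φ, hφ, hφZ, hφB⟩ := main_aux hchain hV hVe1 hinv' hpiV hc hρ0 hρ1.le
    herg hpi1 n k t hmono htN (fun i => (p i.succ : ℝ) / s) (fun i => ha _)
    (by linarith [ha 0]) (fun i => h i.succ) (fun i => hmem _)
  have hB0 := Bd_nonneg hVe1 hK hρ0 k t (fun i => (p i.succ : ℝ) / s) (fun i => h i.succ)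
  obtain ⟨b1, i1, b2, ce, ei⟩ := mul_step hchain hinv' hVe1 hpiV (htN 0) (ha 0)
    (Finset.sum_nonneg fun i _ => ha (Fin.succ i)) hs' hZ hD hZD hφ hφZ hB0 hφB (hmem 0)
  rw [← Fin.sum_univ_succ (f := fun i => (p i : ℝ) / s)] at b2
  have hv0 : 0 ≤ vnorm (fun x => V x ^ ((p 0 : ℝ) / s)) (h 0) :=
    vnorm_nonneg fun x => Real.rpow_pos_of_pos (hV0 x) _
  have hcm : cmom P (List.ofFn fun i : Fin (k + 1) => fun ω => h i (Xs (t i) ω)) =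
      ∫ x, h 0 x * φ x ∂piQ := by
    rw [List.ofFn_succ]
    exact ei
  rw [hcm]
  have hgi : Integrable (fun x => h 0 x * φ x) piQ :=
    integrable_of_le_rpow hVe1 hpiV hsum ((hmem 0).meas.mul hφ) (mul_nonneg hv0 hB0) b2
  have hVi : Integrable (fun x => V x ^ (∑ i, (p i : ℝ) / s)) piQ :=
    integrable_of_le_rpow hVe1 hpiV hsum (hV.pow_const _) zero_le_one (fun x => by
      rw [one_mul, abs_of_nonneg (Real.rpow_nonneg (hV0 x).le _)])
  have hJ := integral_rpow_le_of (η := piQ) (T := 1) (w := c * ∫ x, V x ∂piQ) hV hVe1 hpiV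
    hsum0 hsum hK (by simp) (by nlinarith)
  rw [one_mul] at hJ
  have step : |∫ x, h 0 x * φ x ∂piQ| ≤ (vnorm (fun x => V x ^ ((p 0 : ℝ) / s)) (h 0) *
      Bd V (c * ∫ x, V x ∂piQ) ρ k t (fun i => (p i.succ : ℝ) / s) (fun i => h i.succ)) *
      (c * ∫ x, V x ∂piQ) ^ (∑ i, (p i : ℝ) / s) := by
    refine abs_integral_le_integral_abs.trans ?_
    refine (integral_mono hgi.abs (hVi.const_mul _) b2).trans ?_
    rw [integral_const_mul]
    exact mul_le_mul_of_nonneg_left hJ (mul_nonneg hv0 hB0)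
  refine step.trans_eq ?_
  rw [sum_tail k (fun j => (p j : ℝ) / s), Real.rpow_add hK, Fin.prod_univ_succ]
  have e3 : (∑ i : Fin (k + 1 - 1),
          ((t ⟨(i : ℕ) + 1, by have := i.isLt; omega⟩
              - t ⟨(i : ℕ), by have := i.isLt; omega⟩ : ℕ) : ℝ) *
            (p ⟨(i : ℕ) + 1, by have := i.isLt; omega⟩ : ℝ) / (s : ℝ)) =
      ∑ i : Fin k, ((t i.succ - t i.castSucc : ℕ) : ℝ) * ((p i.succ : ℝ) / s) := by
    refine Finset.sum_congr rfl fun i _ => ?_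
    rw [mul_div_assoc]
    rfl
  rw [e3, Nat.add_sub_cancel]
  unfold Bd
  ring
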